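/- Let Z = max_{1≤k≤K} Y_k where, conditioned on r_0 (chi-squared with 2N degrees of freedom), the Y_k are i.i.d. noncentral chi-squared with 2N degrees of freedom and noncentrality (μ²/(1-μ²))r_0. Then Z has density f_Z(z) = K ∫_0^∞ [r^{N-1} exp(-r/2)/(2^{N+1} Γ(N))] [1 - Q_N(√((μ²/(1-μ²))r), √z)]^{K-1} [Q_N(√((μ²/(1-μ²))r), √z) - Q_{N-1}(√((μ²/(1-μ²))r), √z)] dr for z > 0. -/

import Mathlib

open MeasureTheory ProbabilityTheory Real Set Filter

/-- Modified Bessel function of the first kind of (integer) order `n`. -/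
noncomputable def besselI (n : ℕ) (x : ℝ) : ℝ :=
  ∑' m : ℕ, (x / 2) ^ (2 * m + n) / ((Nat.factorial m : ℝ) * (Nat.factorial (m + n)))

/-- `N`-th order Marcum Q-function, `Q_N(a,b) = ∫_b^∞ x (x/a)^{N-1} e^{-(x²+a²)/2} I_{N-1}(ax) dx`,
with its continuous extension (the regularized upper incomplete gamma tail) at `a = 0`. -/
noncomputable def marcumQ (N : ℕ) (a b : ℝ) : ℝ :=
  if a = 0 then
    ∫ x in Ioi b, x ^ (2 * N - 1) * Real.exp (-(x ^ 2) / 2) /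
      (2 ^ (N - 1) * (Nat.factorial (N - 1) : ℝ))
  else
    ∫ x in Ioi b, x * (x / a) ^ (N - 1) * Real.exp (-(x ^ 2 + a ^ 2) / 2)
      * besselI (N - 1) (a * x)

/-- Density of the noncentral chi-squared distribution with `2N` degrees of freedom and
noncentrality `lam` (for `lam = 0` it is the central chi-squared density with `2N` dof). -/
noncomputable def ncChiSqPdf (N : ℕ) (lam h : ℝ) : ℝ :=
  if lam = 0 then h ^ (N - 1) * Real.exp (-h / 2) / (2 ^ N * Real.Gamma N)
  else (1 / 2) * (h / lam) ^ (((N : ℝ) - 1) / 2) * Real.exp (-(h + lam) / 2)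
      * besselI (N - 1) (Real.sqrt (lam * h))

/-- Noncentral chi-squared distribution with `2N` degrees of freedom and noncentrality `lam`. -/
noncomputable def ncChiSq (N : ℕ) (lam : ℝ) : Measure ℝ :=
  volume.withDensity fun h => ENNReal.ofReal (if 0 < h then ncChiSqPdf N lam h else 0)

/-!
The noncentral chi-squared density is a Poisson mixture of gamma densities; summed up, it is an
exponential times `hⁿ` times an entire function of `l h`, which treats `l = 0` and `l > 0` alike.
The series satisfies `(hⁿ⁺¹ Cₙ₊₁(l h))' = hⁿ Cₙ(l h)`, so the densities `fₙ` with `2 (n + 1)`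
degrees of freedom satisfy `2 fₙ₊₁' = fₙ - fₙ₊₁`. Integrating over `(z, ∞)` and substituting
`h = x²` in the Marcum integral gives `1 - Q_{n+1}(√l, √z) = ∫₀ᶻ fₙ` and
`Q_{n+2}(√l, √z) - Q_{n+1}(√l, √z) = 2 fₙ₊₁(z)`. Given the noncentrality, the maximum of `k`
independent copies has distribution function `Fᵏ`, hence density `k Fᵏ⁻¹ f`, and by Tonelli's
theorem the density of a mixture is the mixture of the densities.
-/

section GammaDistribution

lemma withDensity_ofReal_ite_pos (ν : Measure ℝ) (g : ℝ → ℝ) :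
    ν.withDensity (fun x => ENNReal.ofReal (if 0 < x then g x else 0)) =
      (ν.restrict (Ioi 0)).withDensity fun x => ENNReal.ofReal (g x) := by
  rw [← withDensity_indicator measurableSet_Ioi]
  congr 1 with x
  by_cases hx : 0 < x <;> simp [hx]

lemma gammaMeasure_eq_restrict_withDensity (a r : ℝ) :
    gammaMeasure a r = (volume.restrict (Ioi 0)).withDensity (gammaPDF a r) := by
  rw [gammaMeasure, ← withDensity_indicator measurableSet_Ioi]
  refine withDensity_congr_ae ?_
  filter_upwards [Measure.ae_ne volume 0] with x hx
  rcases hx.lt_or_gt with hneg | hpos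
  · rw [gammaPDF_of_neg hneg, indicator_of_notMem (notMem_Ioi.2 hneg.le)]
  · rw [indicator_of_mem (mem_Ioi.2 hpos)]

lemma ae_gammaMeasure_pos (a r : ℝ) : ∀ᵐ x ∂gammaMeasure a r, 0 < x := by
  rw [gammaMeasure_eq_restrict_withDensity]
  exact (withDensity_absolutelyContinuous _ _).ae_le (ae_restrict_mem measurableSet_Ioi)

lemma setLIntegral_gammaPDF_Ioi {a r : ℝ} (ha : 0 < a) (hr : 0 < r) :
    ∫⁻ x in Ioi 0, gammaPDF a r x = 1 := by
  have := isProbabilityMeasure_gammaMeasure ha hr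
  have hmass := measure_univ (μ := gammaMeasure a r)
  rwa [gammaMeasure_eq_restrict_withDensity, withDensity_apply _ .univ, Measure.restrict_univ]
    at hmass

lemma integral_gammaMeasure {E : Type*} [NormedAddCommGroup E] [NormedSpace ℝ E] {a r : ℝ}
    (ha : 0 < a) (hr : 0 < r) (F : ℝ → E) :
    ∫ x, F x ∂gammaMeasure a r = ∫ x in Ioi 0, gammaPDFReal a r x • F x := by
  have hmeas : Measurable (gammaPDF a r) := (measurable_gammaPDFReal a r).ennreal_ofReal
  rw [gammaMeasure_eq_restrict_withDensity,
    integral_withDensity_eq_integral_toReal_smul hmeas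
      (ae_of_all _ fun _ => ENNReal.ofReal_lt_top)]
  simp only [gammaPDF, ENNReal.toReal_ofReal (gammaPDFReal_nonneg ha hr _)]

lemma gammaPDFReal_natCast_half {N : ℕ} (hN : N ≠ 0) {x : ℝ} (hx : 0 ≤ x) :
    gammaPDFReal N (1 / 2) x = x ^ (N - 1) * exp (-x / 2) / (2 ^ N * Gamma N) := by
  rw [gammaPDFReal, if_pos hx, ← Nat.cast_pred (Nat.pos_of_ne_zero hN), rpow_natCast, rpow_natCast,
    one_div, inv_pow, show -(2⁻¹ * x) = -x / 2 by ring]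
  ring

lemma half_mul_integral_gammaMeasure_natCast_half {N : ℕ} (hN : N ≠ 0) (c : ℝ) (F : ℝ → ℝ) :
    c / 2 * ∫ r, F r ∂gammaMeasure N (1 / 2) =
      c * ∫ r in Ioi 0, r ^ (N - 1) * exp (-r / 2) / (2 ^ (N + 1) * Gamma N) * F r := by
  rw [integral_gammaMeasure (by positivity) (by positivity), div_mul_eq_mul_div, mul_div_assoc,
    ← integral_div]
  congr 1
  refine setIntegral_congr_fun measurableSet_Ioi fun r hr => ?_
  rw [gammaPDFReal_natCast_half hN (le_of_lt hr), smul_eq_mul, pow_succ]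
  ring

lemma gammaPDFReal_natCast_half_le {N : ℕ} (hN : N ≠ 0) {x : ℝ} (hx : 0 ≤ x) :
    gammaPDFReal N (1 / 2) x ≤ 1 / 2 := by
  obtain ⟨k, rfl⟩ := Nat.exists_eq_add_one_of_ne_zero hN
  calc gammaPDFReal ↑(k + 1) (1 / 2) x
      = 1 / 2 * ((x / 2) ^ k / k.factorial * exp (-(x / 2))) := by
        rw [gammaPDFReal_natCast_half k.add_one_ne_zero hx, Nat.cast_succ, Gamma_nat_eq_factorial,
          neg_div, Nat.add_sub_cancel, div_pow]
        ring
    _ ≤ 1 / 2 * (exp (x / 2) * exp (-(x / 2))) := by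
        gcongr
        exact pow_div_factorial_le_exp _ (by positivity) k
    _ = 1 / 2 := by rw [← exp_add, add_neg_cancel, exp_zero, mul_one]

end GammaDistribution

section BesselClifford

/-- The Bessel-Clifford function `C_n(x) = ∑ xᵐ / (m! (m + n)!)`, the entire function for which
`I_n(x) = (x / 2)ⁿ C_n(x² / 4)`. -/
noncomputable def besselClifford (n : ℕ) (x : ℝ) : ℝ :=
  ∑' m : ℕ, x ^ m / (m.factorial * (m + n).factorial)

lemma besselI_eq_pow_mul_besselClifford (n : ℕ) (x : ℝ) :
    besselI n x = (x / 2) ^ n * besselClifford n ((x / 2) ^ 2) := by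
  rw [besselI, besselClifford, ← tsum_mul_left]
  congr 1 with m
  rw [pow_add, pow_mul]
  ring

lemma besselClifford_zero (n : ℕ) : besselClifford n 0 = 1 / n.factorial := by
  rw [besselClifford, tsum_eq_single 0 fun m hm => by simp [hm]]
  simp

lemma norm_besselClifford_term_le (n m : ℕ) {x R : ℝ} (hx : |x| ≤ R) :
    ‖x ^ m / (m.factorial * (m + n).factorial : ℝ)‖ ≤ R ^ m / m.factorial := by
  have hfact : (1 : ℝ) ≤ (m + n).factorial := mod_cast Nat.factorial_pos _
  rw [norm_div, norm_pow, norm_eq_abs, norm_of_nonneg (by positivity)]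
  have hR : 0 ≤ R := (abs_nonneg x).trans hx
  gcongr
  exact le_mul_of_one_le_right (by positivity) hfact

lemma summable_besselClifford (n : ℕ) (x : ℝ) :
    Summable fun m : ℕ => x ^ m / (m.factorial * (m + n).factorial : ℝ) :=
  .of_norm_bounded (summable_pow_div_factorial |x|)
    fun m => norm_besselClifford_term_le n m le_rfl

lemma continuous_besselClifford (n : ℕ) : Continuous (besselClifford n) := by
  refine continuous_iff_continuousAt.2 fun x => ?_
  have hball : ContinuousOn (besselClifford n) (Metric.closedBall 0 (|x| + 1)) :=
    continuousOn_tsum (fun m => by fun_prop) (summable_pow_div_factorial (|x| + 1))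
      fun m y hy => norm_besselClifford_term_le n m (by simpa using hy)
  exact hball.continuousAt (Metric.closedBall_mem_nhds_of_mem (by simp))

lemma hasDerivAt_pow_succ_div_factorial (k : ℕ) (x : ℝ) :
    HasDerivAt (fun y : ℝ => y ^ (k + 1) / (k + 1).factorial) (x ^ k / k.factorial) x := by
  refine ((hasDerivAt_pow (k + 1) x).div_const _).congr_deriv ?_
  rw [Nat.factorial_succ, Nat.add_sub_cancel, Nat.cast_mul, mul_div_mul_left _ _ (by positivity)]

lemma pow_mul_besselClifford_mul (n : ℕ) (a x : ℝ) :
    x ^ n * besselClifford n (a * x) =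
      ∑' m : ℕ, a ^ m / m.factorial * (x ^ (m + n) / (m + n).factorial) := by
  rw [besselClifford, ← tsum_mul_left]
  congr 1 with m
  rw [mul_pow, pow_add]
  ring

lemma hasDerivAt_pow_mul_besselClifford_mul (n : ℕ) (a x : ℝ) :
    HasDerivAt (fun y => y ^ (n + 1) * besselClifford (n + 1) (a * y))
      (x ^ n * besselClifford n (a * x)) x := by
  simp only [pow_mul_besselClifford_mul]
  have hzero : 0 ∈ Metric.ball (0 : ℝ) (|x| + 1) := Metric.mem_ball_self (by positivity)
  have hsum : Summable fun m : ℕ => (|x| + 1) ^ n * ((|a| * (|x| + 1)) ^ m / m.factorial) :=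
    (summable_pow_div_factorial _).mul_left _
  refine hasDerivAt_tsum_of_isPreconnected
    (g := fun m y => a ^ m / m.factorial * (y ^ (m + n + 1) / (m + n + 1).factorial))
    hsum Metric.isOpen_ball (convex_ball _ _).isPreconnected
    (fun m y _ => (hasDerivAt_pow_succ_div_factorial (m + n) y).const_mul _)
    (fun m y hy => ?_) hzero (by simp) (by simp)
  have hy' : |y| ≤ |x| + 1 := by simpa using (Metric.mem_ball.1 hy).le
  calc ‖a ^ m / m.factorial * (y ^ (m + n) / (m + n).factorial)‖
      = |y| ^ n * ‖(a * y) ^ m / (m.factorial * (m + n).factorial)‖ := by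
        rw [← norm_eq_abs, ← norm_pow, ← norm_mul, mul_pow, pow_add]
        congr 1
        ring
    _ ≤ (|x| + 1) ^ n * ((|a| * (|x| + 1)) ^ m / m.factorial) := by
        gcongr
        refine norm_besselClifford_term_le n m ?_
        rw [abs_mul]
        gcongr

end BesselClifford

section NoncentralChiSquared

/-- The density of the noncentral chi-squared distribution with `2 * (n + 1)` degrees of freedom
and noncentrality `l`, written through the Bessel-Clifford function: unlike `ncChiSqPdf` it needs no
case distinction at `l = 0` and is continuous in both variables. It is the density only for
`0 ≤ h`. -/
noncomputable def ncChiSqDensity (n : ℕ) (l h : ℝ) : ℝ :=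
  exp (-(l + h) / 2) / 2 * ((h / 2) ^ n * besselClifford n (l / 2 * (h / 2)))

lemma continuous_ncChiSqDensity_uncurry (n : ℕ) :
    Continuous (Function.uncurry (ncChiSqDensity n)) := by
  have := continuous_besselClifford n
  unfold ncChiSqDensity Function.uncurry
  fun_prop

lemma continuous_ncChiSqDensity (n : ℕ) (l : ℝ) : Continuous (ncChiSqDensity n l) :=
  (continuous_ncChiSqDensity_uncurry n).comp (Continuous.prodMk_right l)

lemma hasDerivAt_ncChiSqDensity_succ (n : ℕ) (l h : ℝ) :
    HasDerivAt (ncChiSqDensity (n + 1) l)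
      ((ncChiSqDensity n l h - ncChiSqDensity (n + 1) l h) / 2) h := by
  have hhalf : HasDerivAt (fun y : ℝ => y / 2) (1 / 2) h := (hasDerivAt_id h).div_const 2
  have hexp : HasDerivAt (fun y : ℝ => exp (-(l + y) / 2) / 2)
      (exp (-(l + h) / 2) * (-1 / 2) / 2) h :=
    ((((hasDerivAt_id h).const_add l).neg.div_const 2).exp).div_const 2
  have hbessel := (hasDerivAt_pow_mul_besselClifford_mul n (l / 2) (h / 2)).comp h hhalf
  refine (hexp.mul hbessel).congr_deriv ?_
  simp only [ncChiSqDensity, Function.comp_apply]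
  ring

lemma hasSum_poisson_mul_gammaPDFReal (n : ℕ) (l : ℝ) {h : ℝ} (hh : 0 ≤ h) :
    HasSum (fun m : ℕ => exp (-(l / 2)) * (l / 2) ^ m / m.factorial *
      gammaPDFReal ((n + m + 1 : ℕ) : ℝ) (1 / 2) h) (ncChiSqDensity n l h) := by
  have hterm : ∀ m : ℕ, exp (-(l / 2)) * (l / 2) ^ m / m.factorial *
      gammaPDFReal ((n + m + 1 : ℕ) : ℝ) (1 / 2) h =
      exp (-(l + h) / 2) / 2 * (h / 2) ^ n *
        ((l / 2 * (h / 2)) ^ m / (m.factorial * (m + n).factorial)) := by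
    intro m
    rw [gammaPDFReal_natCast_half (n + m).add_one_ne_zero hh, Nat.cast_succ, Gamma_nat_eq_factorial,
      Nat.add_sub_cancel, add_comm m n, show -(l + h) / 2 = -(l / 2) + -h / 2 by ring, exp_add,
      mul_pow, div_pow h, div_pow h]
    field_simp
    ring
  simp only [hterm]
  rw [ncChiSqDensity, ← mul_assoc]
  exact (summable_besselClifford n _).hasSum.mul_left _

lemma hasSum_poisson_weights {x : ℝ} (hx : 0 ≤ x) :
    HasSum (fun m : ℕ => exp (-x) * x ^ m / m.factorial) 1 := by
  lift x to NNReal using hx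
  exact hasSum_one_poissonMeasure x

lemma ncChiSqDensity_nonneg (n : ℕ) {l h : ℝ} (hl : 0 ≤ l) (hh : 0 ≤ h) :
    0 ≤ ncChiSqDensity n l h :=
  (hasSum_poisson_mul_gammaPDFReal n l hh).nonneg fun m =>
    mul_nonneg (by positivity) (gammaPDFReal_nonneg (by positivity) (by positivity) h)

lemma ncChiSqDensity_le_half (n : ℕ) {l h : ℝ} (hl : 0 ≤ l) (hh : 0 ≤ h) :
    ncChiSqDensity n l h ≤ 1 / 2 := by
  refine (hasSum_le (fun m => ?_) (hasSum_poisson_mul_gammaPDFReal n l hh)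
    ((hasSum_poisson_weights (x := l / 2) (by positivity)).mul_right (1 / 2))).trans_eq
    (one_mul _)
  gcongr
  exact gammaPDFReal_natCast_half_le (n + m).add_one_ne_zero hh

lemma setLIntegral_ncChiSqDensity (n : ℕ) {l : ℝ} (hl : 0 ≤ l) :
    ∫⁻ h in Ioi 0, ENNReal.ofReal (ncChiSqDensity n l h) = 1 := by
  set w : ℕ → ℝ := fun m => exp (-(l / 2)) * (l / 2) ^ m / m.factorial
  have hw_nonneg : ∀ m, 0 ≤ w m := fun m => by positivity
  have hw : HasSum w 1 := hasSum_poisson_weights (by positivity)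
  have hgamma : ∀ (a : ℝ), Measurable (gammaPDF a (1 / 2)) := fun a =>
    (measurable_gammaPDFReal a _).ennreal_ofReal
  have hmix : ∀ h ∈ Ioi (0 : ℝ), ENNReal.ofReal (ncChiSqDensity n l h) =
      ∑' m, ENNReal.ofReal (w m) * gammaPDF (n + m + 1 : ℕ) (1 / 2) h := by
    intro h hh
    have hsum := hasSum_poisson_mul_gammaPDFReal n l (le_of_lt hh)
    rw [← hsum.tsum_eq, ENNReal.ofReal_tsum_of_nonneg
      (fun m => mul_nonneg (hw_nonneg m)
        (gammaPDFReal_nonneg (by positivity) (by positivity) h)) hsum.summable]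
    simp only [ENNReal.ofReal_mul (hw_nonneg _), gammaPDF, w]
  calc ∫⁻ h in Ioi 0, ENNReal.ofReal (ncChiSqDensity n l h)
      = ∑' m, ∫⁻ h in Ioi 0, ENNReal.ofReal (w m) * gammaPDF (n + m + 1 : ℕ) (1 / 2) h := by
        rw [setLIntegral_congr_fun measurableSet_Ioi hmix,
          lintegral_tsum fun m => ((hgamma _).const_mul _).aemeasurable]
    _ = ∑' m, ENNReal.ofReal (w m) := by
        congr 1 with m
        rw [lintegral_const_mul _ (hgamma _),
          setLIntegral_gammaPDF_Ioi (by positivity) (by positivity), mul_one]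
    _ = 1 := by
        rw [← ENNReal.ofReal_tsum_of_nonneg hw_nonneg hw.summable, hw.tsum_eq, ENNReal.ofReal_one]

lemma ae_restrict_Ioi_ncChiSqDensity_nonneg (n : ℕ) {l : ℝ} (hl : 0 ≤ l) :
    0 ≤ᵐ[volume.restrict (Ioi 0)] ncChiSqDensity n l := by
  filter_upwards [ae_restrict_mem measurableSet_Ioi] with h hh
  exact ncChiSqDensity_nonneg n hl (le_of_lt hh)

lemma integrableOn_ncChiSqDensity (n : ℕ) {l : ℝ} (hl : 0 ≤ l) :
    IntegrableOn (ncChiSqDensity n l) (Ioi 0) := by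
  refine ⟨(continuous_ncChiSqDensity n l).aestronglyMeasurable, ?_⟩
  rw [hasFiniteIntegral_iff_ofReal (ae_restrict_Ioi_ncChiSqDensity_nonneg n hl),
    setLIntegral_ncChiSqDensity n hl]
  exact ENNReal.one_lt_top

lemma integral_ncChiSqDensity (n : ℕ) {l : ℝ} (hl : 0 ≤ l) :
    ∫ h in Ioi 0, ncChiSqDensity n l h = 1 := by
  rw [integral_eq_lintegral_of_nonneg_ae (ae_restrict_Ioi_ncChiSqDensity_nonneg n hl)
    (continuous_ncChiSqDensity n l).aestronglyMeasurable, setLIntegral_ncChiSqDensity n hl,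
    ENNReal.toReal_one]

lemma integral_Ioi_ncChiSqDensity_succ_sub (n : ℕ) {l z : ℝ} (hl : 0 ≤ l) (hz : 0 ≤ z) :
    (∫ h in Ioi z, ncChiSqDensity (n + 1) l h) - ∫ h in Ioi z, ncChiSqDensity n l h =
      2 * ncChiSqDensity (n + 1) l z := by
  have hint : ∀ k, IntegrableOn (ncChiSqDensity k l) (Ioi z) := fun k =>
    (integrableOn_ncChiSqDensity k hl).mono_set (Ioi_subset_Ioi hz)
  have hint_deriv : IntegrableOn
      (fun h => (ncChiSqDensity n l h - ncChiSqDensity (n + 1) l h) / 2) (Ioi z) :=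
    ((hint n).sub (hint (n + 1))).div_const 2
  have hderiv := hasDerivAt_ncChiSqDensity_succ n l
  have hlim : Tendsto (ncChiSqDensity (n + 1) l) atTop (nhds 0) :=
    tendsto_zero_of_hasDerivAt_of_integrableOn_Ioi (fun h _ => hderiv h) hint_deriv
      (hint (n + 1))
  have hftc := integral_Ioi_of_hasDerivAt_of_tendsto' (fun h _ => hderiv h) hint_deriv hlim
  rw [integral_div, integral_sub (hint n) (hint (n + 1))] at hftc
  linarith

lemma ncChiSqPdf_succ_eq (n : ℕ) {l h : ℝ} (hl : 0 ≤ l) (hh : 0 < h) :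
    ncChiSqPdf (n + 1) l h = ncChiSqDensity n l h := by
  rcases hl.eq_or_lt with rfl | hl
  · rw [ncChiSqPdf, if_pos rfl, ncChiSqDensity, zero_div, zero_mul, besselClifford_zero,
      Nat.cast_succ, Gamma_nat_eq_factorial, Nat.add_sub_cancel, zero_add, div_pow, pow_succ]
    field_simp
  · have hrpow : (h / l) ^ (((n + 1 : ℕ) - 1 : ℝ) / 2) = √(h / l) ^ n := by
      rw [sqrt_eq_rpow, ← rpow_natCast, ← rpow_mul (by positivity)]
      congr 1
      push_cast
      ring
    have hpow : √(h / l) ^ n * (√(l * h) / 2) ^ n = (h / 2) ^ n := by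
      rw [← mul_pow, ← mul_div_assoc, ← sqrt_mul (by positivity),
        show h / l * (l * h) = h ^ 2 by field_simp, sqrt_sq hh.le]
    have harg : (√(l * h) / 2) ^ 2 = l / 2 * (h / 2) := by
      rw [div_pow, sq_sqrt (by positivity)]
      ring
    rw [ncChiSqPdf, if_neg hl.ne', ncChiSqDensity, hrpow, besselI_eq_pow_mul_besselClifford,
      Nat.add_sub_cancel, harg, ← hpow, add_comm h l]
    ring

lemma ncChiSqPdf_of_neg {N : ℕ} (hN : 2 ≤ N) {l h : ℝ} (hl : l < 0) (hh : 0 ≤ h) :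
    ncChiSqPdf N l h = 0 := by
  rw [ncChiSqPdf, if_neg hl.ne, besselI_eq_pow_mul_besselClifford,
    sqrt_eq_zero_of_nonpos (mul_nonpos_of_nonpos_of_nonneg hl.le hh), zero_div,
    zero_pow (by lia), zero_mul, mul_zero]

lemma ncChiSq_succ_eq_withDensity (n : ℕ) {l : ℝ} (hl : 0 ≤ l) :
    ncChiSq (n + 1) l =
      (volume.restrict (Ioi 0)).withDensity fun h => ENNReal.ofReal (ncChiSqDensity n l h) := by
  rw [ncChiSq, withDensity_ofReal_ite_pos]
  refine withDensity_congr_ae ?_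
  filter_upwards [ae_restrict_mem measurableSet_Ioi] with h hh
  rw [ncChiSqPdf_succ_eq n hl hh]

lemma ncChiSq_of_neg {N : ℕ} (hN : 2 ≤ N) {l : ℝ} (hl : l < 0) : ncChiSq N l = 0 := by
  rw [ncChiSq, withDensity_ofReal_ite_pos, ← withDensity_zero (μ := volume.restrict (Ioi 0))]
  refine withDensity_congr_ae ?_
  filter_upwards [ae_restrict_mem measurableSet_Ioi] with h hh
  rw [ncChiSqPdf_of_neg hN hl (le_of_lt hh), ENNReal.ofReal_zero, Pi.zero_apply]

lemma ncChiSq_univ_le_one {N : ℕ} (hN : 2 ≤ N) (l : ℝ) : ncChiSq N l univ ≤ 1 := by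
  rcases lt_or_ge l 0 with hl | hl
  · simp [ncChiSq_of_neg hN hl]
  · obtain ⟨n, rfl⟩ : ∃ n, N = n + 1 := ⟨N - 1, by lia⟩
    rw [ncChiSq_succ_eq_withDensity n hl, withDensity_apply _ .univ, Measure.restrict_univ,
      setLIntegral_ncChiSqDensity n hl]

end NoncentralChiSquared

section MarcumQ

lemma integral_Ioi_sq {E : Type*} [NormedAddCommGroup E] [NormedSpace ℝ E] (f : ℝ → E) {b : ℝ}
    (hb : 0 ≤ b) : ∫ h in Ioi (b ^ 2), f h = ∫ x in Ioi b, (2 * x) • f (x ^ 2) := by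
  have himage : (fun x : ℝ => x ^ 2) '' Ioi b = Ioi (b ^ 2) := by
    ext y
    refine ⟨?_, fun hy => ⟨√y, lt_sqrt_of_sq_lt hy, sq_sqrt ((sq_nonneg b).trans (le_of_lt hy))⟩⟩
    rintro ⟨x, hx, rfl⟩
    exact pow_lt_pow_left₀ hx hb two_ne_zero
  have hmono : MonotoneOn (fun x : ℝ => x ^ 2) (Ioi b) := fun x hx y _ hxy =>
    pow_le_pow_left₀ (hb.trans (le_of_lt hx)) hxy 2
  rw [← himage, integral_image_eq_integral_deriv_smul_of_monotoneOn measurableSet_Ioi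
    (fun x _ => by simpa using (hasDerivAt_pow 2 x).hasDerivWithinAt) hmono]

lemma marcumQ_succ_eq_integral (n : ℕ) {a b : ℝ} (ha : 0 ≤ a) (hb : 0 ≤ b) :
    marcumQ (n + 1) a b = ∫ h in Ioi (b ^ 2), ncChiSqDensity n (a ^ 2) h := by
  rw [integral_Ioi_sq _ hb, marcumQ]
  rcases ha.eq_or_lt with rfl | ha
  · rw [if_pos rfl]
    congr 1 with x
    rw [ncChiSqDensity, zero_pow two_ne_zero, zero_div, zero_mul, besselClifford_zero, zero_add,
      Nat.add_sub_cancel, smul_eq_mul, show 2 * (n + 1) - 1 = 2 * n + 1 by lia, pow_succ, pow_mul,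
      div_pow]
    field_simp
  · rw [if_neg ha.ne']
    congr 1 with x
    have hpow : (x / a) ^ n * (a * x / 2) ^ n = (x ^ 2 / 2) ^ n := by
      rw [← mul_pow]
      congr 1
      field_simp
    rw [Nat.add_sub_cancel, besselI_eq_pow_mul_besselClifford, ncChiSqDensity, ← hpow, smul_eq_mul,
      add_comm (x ^ 2), show (a * x / 2) ^ 2 = a ^ 2 / 2 * (x ^ 2 / 2) by ring]
    ring

lemma one_sub_marcumQ_succ (n : ℕ) {a b : ℝ} (ha : 0 ≤ a) (hb : 0 ≤ b) :
    1 - marcumQ (n + 1) a b = ∫ h in 0..b ^ 2, ncChiSqDensity n (a ^ 2) h := by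
  rw [marcumQ_succ_eq_integral n ha hb, ← integral_ncChiSqDensity n (sq_nonneg a),
    intervalIntegral.integral_Ioi_sub_Ioi (integrableOn_ncChiSqDensity n (sq_nonneg a))
      (sq_nonneg b)]

lemma marcumQ_succ_sub_marcumQ (n : ℕ) {a b : ℝ} (ha : 0 ≤ a) (hb : 0 ≤ b) :
    marcumQ (n + 2) a b - marcumQ (n + 1) a b = 2 * ncChiSqDensity (n + 1) (a ^ 2) (b ^ 2) := by
  rw [marcumQ_succ_eq_integral (n + 1) ha hb, marcumQ_succ_eq_integral n ha hb,
    integral_Ioi_ncChiSqDensity_succ_sub n (sq_nonneg a) (sq_nonneg b)]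

lemma marcumQ_succ_mem_Icc (n : ℕ) {a b : ℝ} (ha : 0 ≤ a) (hb : 0 ≤ b) :
    marcumQ (n + 1) a b ∈ Icc 0 1 := by
  constructor
  · rw [marcumQ_succ_eq_integral n ha hb]
    exact setIntegral_nonneg measurableSet_Ioi fun h hh =>
      ncChiSqDensity_nonneg n (sq_nonneg a) ((sq_nonneg b).trans (le_of_lt hh))
  · rw [← sub_nonneg, one_sub_marcumQ_succ n ha hb]
    exact intervalIntegral.integral_nonneg (sq_nonneg b) fun h hh =>
      ncChiSqDensity_nonneg n (sq_nonneg a) hh.1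

end MarcumQ

section Maximum

lemma integral_pow_primitive_mul {f : ℝ → ℝ} (hf : Continuous f) (a z : ℝ) {k : ℕ} (hk : k ≠ 0) :
    ∫ t in a..z, k * (∫ s in a..t, f s) ^ (k - 1) * f t = (∫ s in a..z, f s) ^ k := by
  have hF : ∀ t, HasDerivAt (fun u => ∫ s in a..u, f s) (f t) t := fun t =>
    hf.integral_hasStrictDerivAt a t |>.hasDerivAt
  have : Continuous fun u => ∫ s in a..u, f s :=
    continuous_iff_continuousAt.2 fun t => (hF t).continuousAt
  rw [intervalIntegral.integral_eq_sub_of_hasDerivAt (fun t _ => (hF t).pow k)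
    (Continuous.intervalIntegrable (by fun_prop) a z)]
  simp [hk]

lemma setLIntegral_Ioc_pow {f : ℝ → ℝ} (hf : Continuous f) {a : ℝ}
    (hf_nonneg : ∀ t, a ≤ t → 0 ≤ f t) (z : ℝ) {k : ℕ} (hk : k ≠ 0) :
    (∫⁻ t in Ioc a z, ENNReal.ofReal (f t)) ^ k =
      ∫⁻ t in Ioc a z, ENNReal.ofReal (k * (∫ s in a..t, f s) ^ (k - 1) * f t) := by
  rcases lt_or_ge z a with hz | hz
  · simp [Ioc_eq_empty_of_le hz.le, hk]
  have hF_nonneg : ∀ t, a ≤ t → 0 ≤ ∫ s in a..t, f s := fun t ht =>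
    intervalIntegral.integral_nonneg ht fun s hs => hf_nonneg s hs.1
  have : Continuous fun t => ∫ s in a..t, f s :=
    intervalIntegral.continuous_primitive (fun _ _ => hf.intervalIntegrable _ _) a
  have hlintegral : ∀ {g : ℝ → ℝ}, Continuous g → (∀ t, a ≤ t → 0 ≤ g t) →
      ∫⁻ t in Ioc a z, ENNReal.ofReal (g t) = ENNReal.ofReal (∫ t in a..z, g t) := by
    intro g hg hg_nonneg
    rw [intervalIntegral.integral_of_le hz, ofReal_integral_eq_lintegral_ofReal hg.integrableOn_Ioc]
    filter_upwards [ae_restrict_mem measurableSet_Ioc] with t ht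
    exact hg_nonneg t ht.1.le
  rw [hlintegral hf hf_nonneg, hlintegral (by fun_prop) fun t ht =>
      mul_nonneg (mul_nonneg k.cast_nonneg (pow_nonneg (hF_nonneg t ht) _)) (hf_nonneg t ht),
    integral_pow_primitive_mul hf a z hk, ENNReal.ofReal_pow (hF_nonneg z hz)]

variable {Ω ι : Type*} [MeasurableSpace Ω]

lemma measurable_intervalIntegral_right {f : Ω → ℝ → ℝ} (hf : Measurable (Function.uncurry f))
    (a : ℝ) : Measurable fun p : Ω × ℝ => ∫ t in a..p.2, f p.1 t := by
  have hIoc : ∀ u v : Ω × ℝ → ℝ, Measurable u → Measurable v →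
      Measurable fun p => ∫ t in Ioc (u p) (v p), f p.1 t := by
    intro u v hu hv
    have hset : MeasurableSet {q : (Ω × ℝ) × ℝ | q.2 ∈ Ioc (u q.1) (v q.1)} :=
      (measurableSet_lt (by fun_prop) measurable_snd).inter
        (measurableSet_le measurable_snd (by fun_prop))
    have hmeas : Measurable fun q : (Ω × ℝ) × ℝ => f q.1.1 q.2 :=
      hf.comp (measurable_fst.fst.prodMk measurable_snd)
    simp_rw [← integral_indicator measurableSet_Ioc]
    exact (hmeas.indicator hset).stronglyMeasurable.integral_prod_right'.measurable
  exact (hIoc _ _ measurable_const measurable_snd).sub (hIoc _ _ measurable_snd measurable_const)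

lemma measurable_iSup_pi [Countable ι] : Measurable fun p : Ω × (ι → ℝ) => ⨆ i, p.2 i :=
  .iSup fun i => (measurable_pi_apply i).comp measurable_snd

variable [Fintype ι] [Nonempty ι] {ν : Measure Ω} {κ : Kernel Ω (ι → ℝ)}

lemma map_iSup_compProd_pi_Iic [SFinite ν] [IsSFiniteKernel κ] {P : Ω → Measure ℝ}
    [∀ ω, SigmaFinite (P ω)] (hκ : ∀ᵐ ω ∂ν, κ ω = Measure.pi fun _ => P ω) (x : ℝ) :
    (ν ⊗ₘ κ).map (fun p => ⨆ i, p.2 i) (Iic x) = ∫⁻ ω, P ω (Iic x) ^ Fintype.card ι ∂ν := by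
  rw [Measure.map_apply measurable_iSup_pi measurableSet_Iic,
    Measure.compProd_apply (measurable_iSup_pi measurableSet_Iic)]
  refine lintegral_congr_ae ?_
  filter_upwards [hκ] with ω hω
  have hpre : Prod.mk ω ⁻¹' ((fun p : Ω × (ι → ℝ) => ⨆ i, p.2 i) ⁻¹' Iic x) =
      Set.pi univ fun _ => Iic x := by
    ext y
    simp only [mem_preimage, mem_Iic, Set.mem_pi, mem_univ, forall_const]
    exact ciSup_le_iff (Finite.bddAbove_range y)
  rw [hpre, hω, Measure.pi_pi, Finset.prod_const, Finset.card_univ]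

theorem map_iSup_compProd_pi_withDensity [IsFiniteMeasure ν] [IsFiniteKernel κ] {f : Ω → ℝ → ℝ}
    {a : ℝ} (hf : Measurable (Function.uncurry f)) (hf_cont : ∀ ω, Continuous (f ω))
    (hf_nonneg : ∀ᵐ ω ∂ν, ∀ t, a ≤ t → 0 ≤ f ω t)
    (hκ : ∀ᵐ ω ∂ν, κ ω = Measure.pi fun _ =>
      (volume.restrict (Ioi a)).withDensity fun t => ENNReal.ofReal (f ω t)) :
    (ν ⊗ₘ κ).map (fun p => ⨆ i, p.2 i) =
      (volume.restrict (Ioi a)).withDensity fun z => ∫⁻ ω, ENNReal.ofReal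
        (Fintype.card ι * (∫ t in a..z, f ω t) ^ (Fintype.card ι - 1) * f ω z) ∂ν := by
  have hmeas : Measurable fun p : ℝ × Ω => ENNReal.ofReal
      (Fintype.card ι * (∫ t in a..p.1, f p.2 t) ^ (Fintype.card ι - 1) * f p.2 p.1) := by
    have hF := (measurable_intervalIntegral_right hf a).comp measurable_swap
    exact (((hF.pow_const _).const_mul _).mul (hf.comp measurable_swap)).ennreal_ofReal
  refine Measure.ext_of_Iic _ _ fun z => ?_
  rw [map_iSup_compProd_pi_Iic hκ z, withDensity_apply _ measurableSet_Iic,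
    Measure.restrict_restrict measurableSet_Iic, Iic_inter_Ioi,
    lintegral_lintegral_swap hmeas.aemeasurable]
  refine lintegral_congr_ae ?_
  filter_upwards [hf_nonneg] with ω hω
  rw [withDensity_apply _ measurableSet_Iic, Measure.restrict_restrict measurableSet_Iic,
    Iic_inter_Ioi, setLIntegral_Ioc_pow (hf_cont ω) hω z Fintype.card_ne_zero]

end Maximum

section MaximumOfNoncentralChiSquared

variable {Ω ι : Type*} [MeasurableSpace Ω] [Fintype ι]

lemma isFiniteKernel_of_eq_pi_ncChiSq {N : ℕ} (hN : 2 ≤ N) {lam : Ω → ℝ} {κ : Kernel Ω (ι → ℝ)}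
    (hκ : ∀ ω, κ ω = Measure.pi fun _ => ncChiSq N (lam ω)) : IsFiniteKernel κ := by
  have hfinite : ∀ l, IsFiniteMeasure (ncChiSq N l) := fun l =>
    ⟨(ncChiSq_univ_le_one hN l).trans_lt ENNReal.one_lt_top⟩
  refine ⟨1, ENNReal.one_lt_top, fun ω => ?_⟩
  rw [hκ, Measure.pi_univ]
  exact Finset.prod_le_one' fun _ _ => ncChiSq_univ_le_one hN _

lemma intervalIntegral_ncChiSqDensity_mem_Icc (n : ℕ) {l z : ℝ} (hl : 0 ≤ l) (hz : 0 ≤ z) :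
    ∫ t in 0..z, ncChiSqDensity n l t ∈ Icc 0 1 := by
  obtain ⟨hQ_nonneg, hQ_le⟩ := marcumQ_succ_mem_Icc n (sqrt_nonneg l) (sqrt_nonneg z)
  have hQ := one_sub_marcumQ_succ n (sqrt_nonneg l) (sqrt_nonneg z)
  rw [sq_sqrt hl, sq_sqrt hz] at hQ
  constructor <;> linarith

/-- The density of the maximum of `k` independent noncentral chi-squared variables with
`2 * (n + 1)` degrees of freedom and noncentrality `l`; as for `ncChiSqDensity`, only the values at
`0 ≤ z` have this meaning. -/
noncomputable def ncChiSqMaxDensity (n k : ℕ) (l z : ℝ) : ℝ :=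
  k * (∫ t in 0..z, ncChiSqDensity n l t) ^ (k - 1) * ncChiSqDensity n l z

lemma ncChiSqMaxDensity_succ_eq_marcumQ (n k : ℕ) {l z : ℝ} (hl : 0 ≤ l) (hz : 0 ≤ z) :
    ncChiSqMaxDensity (n + 1) k l z =
      k / 2 * ((1 - marcumQ (n + 2) √l √z) ^ (k - 1) *
        (marcumQ (n + 2) √l √z - marcumQ (n + 1) √l √z)) := by
  rw [ncChiSqMaxDensity, one_sub_marcumQ_succ (n + 1) (sqrt_nonneg l) (sqrt_nonneg z),
    marcumQ_succ_sub_marcumQ n (sqrt_nonneg l) (sqrt_nonneg z), sq_sqrt hl, sq_sqrt hz]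
  ring

lemma ncChiSqMaxDensity_mem_Icc (n k : ℕ) {l z : ℝ} (hl : 0 ≤ l) (hz : 0 ≤ z) :
    ncChiSqMaxDensity n k l z ∈ Icc (0 : ℝ) k := by
  obtain ⟨hF_nonneg, hF_le⟩ := intervalIntegral_ncChiSqDensity_mem_Icc n hl hz
  have hf_nonneg := ncChiSqDensity_nonneg n hl hz
  have hf_le : ncChiSqDensity n l z ≤ 1 := (ncChiSqDensity_le_half n hl hz).trans (by norm_num)
  refine ⟨mul_nonneg (by positivity) hf_nonneg, ?_⟩
  rw [ncChiSqMaxDensity, mul_assoc]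
  exact mul_le_of_le_one_right k.cast_nonneg
    (mul_le_one₀ (pow_le_one₀ hF_nonneg hF_le) hf_nonneg hf_le)

lemma measurable_ncChiSqMaxDensity (n k : ℕ) (z : ℝ) :
    Measurable fun l => ncChiSqMaxDensity n k l z := by
  have hf := (continuous_ncChiSqDensity_uncurry n).measurable
  exact ((((measurable_intervalIntegral_right hf 0).comp measurable_prodMk_right).pow_const
    _).const_mul _).mul (hf.comp measurable_prodMk_right)

variable {ν : Measure Ω} [IsFiniteMeasure ν] {lam : Ω → ℝ}

lemma lintegral_ofReal_ncChiSqMaxDensity (hlam_meas : Measurable lam) (hlam : ∀ᵐ ω ∂ν, 0 ≤ lam ω)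
    (n k : ℕ) {z : ℝ} (hz : 0 ≤ z) :
    ∫⁻ ω, ENNReal.ofReal (ncChiSqMaxDensity n k (lam ω) z) ∂ν =
      ENNReal.ofReal (∫ ω, ncChiSqMaxDensity n k (lam ω) z ∂ν) := by
  have hbounds : ∀ᵐ ω ∂ν, ncChiSqMaxDensity n k (lam ω) z ∈ Icc (0 : ℝ) k :=
    hlam.mono fun ω hω => ncChiSqMaxDensity_mem_Icc n k hω hz
  have hmeas := (measurable_ncChiSqMaxDensity n k z).comp hlam_meas
  exact (ofReal_integral_eq_lintegral_ofReal
    (Integrable.of_mem_Icc 0 k hmeas.aemeasurable hbounds)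
    (hbounds.mono fun ω hω => hω.1)).symm

lemma map_iSup_compProd_pi_ncChiSq_succ [Nonempty ι] (hlam_meas : Measurable lam)
    (hlam : ∀ᵐ ω ∂ν, 0 ≤ lam ω) (n : ℕ) {κ : Kernel Ω (ι → ℝ)} [IsFiniteKernel κ]
    (hκ : ∀ᵐ ω ∂ν, κ ω = Measure.pi fun _ => ncChiSq (n + 1) (lam ω)) :
    (ν ⊗ₘ κ).map (fun p => ⨆ i, p.2 i) = (volume.restrict (Ioi 0)).withDensity fun z =>
      ENNReal.ofReal (∫ ω, ncChiSqMaxDensity n (Fintype.card ι) (lam ω) z ∂ν) := by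
  have hf : Measurable (Function.uncurry fun ω => ncChiSqDensity n (lam ω)) :=
    (continuous_ncChiSqDensity_uncurry n).measurable.comp
      ((hlam_meas.comp measurable_fst).prodMk measurable_snd)
  have hf_nonneg : ∀ᵐ ω ∂ν, ∀ t, 0 ≤ t → 0 ≤ ncChiSqDensity n (lam ω) t :=
    hlam.mono fun ω hω t ht => ncChiSqDensity_nonneg n hω ht
  have hκ_density : ∀ᵐ ω ∂ν, κ ω = Measure.pi fun _ => (volume.restrict (Ioi 0)).withDensity
      fun t => ENNReal.ofReal (ncChiSqDensity n (lam ω) t) := by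
    filter_upwards [hκ, hlam] with ω hω_pi hω
    rw [hω_pi, ncChiSq_succ_eq_withDensity n hω]
  rw [map_iSup_compProd_pi_withDensity hf (fun ω => continuous_ncChiSqDensity _ _) hf_nonneg
    hκ_density]
  refine withDensity_congr_ae ?_
  filter_upwards [ae_restrict_mem measurableSet_Ioi] with z hz
  exact lintegral_ofReal_ncChiSqMaxDensity hlam_meas hlam n _ (le_of_lt hz)

theorem stmt6_general [Nonempty ι] {N : ℕ} (hN : 2 ≤ N) (hlam_meas : Measurable lam)
    (hlam : ∀ᵐ ω ∂ν, 0 ≤ lam ω) {κ : Kernel Ω (ι → ℝ)}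
    (hκ : ∀ ω, κ ω = Measure.pi fun _ => ncChiSq N (lam ω)) :
    (ν ⊗ₘ κ).map (fun p => ⨆ i, p.2 i) =
      volume.withDensity fun z => ENNReal.ofReal (if 0 < z then
        Fintype.card ι / 2 * ∫ ω, (1 - marcumQ N √(lam ω) √z) ^ (Fintype.card ι - 1) *
          (marcumQ N √(lam ω) √z - marcumQ (N - 1) √(lam ω) √z) ∂ν
        else 0) := by
  have := isFiniteKernel_of_eq_pi_ncChiSq hN hκ
  obtain ⟨n, rfl⟩ : ∃ n, N = n + 2 := ⟨N - 2, by lia⟩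
  rw [map_iSup_compProd_pi_ncChiSq_succ hlam_meas hlam (n + 1) (ae_of_all _ hκ),
    withDensity_ofReal_ite_pos]
  refine withDensity_congr_ae ?_
  filter_upwards [ae_restrict_mem measurableSet_Ioi] with z hz
  rw [← integral_const_mul]
  congr 1
  refine integral_congr_ae ?_
  filter_upwards [hlam] with ω hω
  exact ncChiSqMaxDensity_succ_eq_marcumQ n _ hω (le_of_lt hz)

end MaximumOfNoncentralChiSquared

/-- Density of `Z = max_k Y_k` where, conditioned on `r₀` (chi-squared with `2N` dof), the `Y_k`
are i.i.d. noncentral chi-squared with `2N` dof and noncentrality `(μ²/(1-μ²))r₀`. -/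
theorem stmt6 (N K : ℕ) (hN : 2 ≤ N) (hK : 1 ≤ K) (μ : ℝ) (hμ : μ ∈ Set.Ioo (0 : ℝ) 1)
    (κ : Kernel ℝ (Fin K → ℝ))
    (hκ : ∀ r, κ r = Measure.pi fun _ => ncChiSq N (μ ^ 2 / (1 - μ ^ 2) * r)) :
    Measure.map (fun p : ℝ × (Fin K → ℝ) => ⨆ k, p.2 k) (gammaMeasure N (1 / 2) ⊗ₘ κ)
      = volume.withDensity (fun z => ENNReal.ofReal (if 0 < z then
          K * ∫ r in Ioi 0,
            r ^ (N - 1) * Real.exp (-r / 2) / (2 ^ (N + 1) * Real.Gamma N)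
              * (1 - marcumQ N (Real.sqrt (μ ^ 2 / (1 - μ ^ 2) * r)) (Real.sqrt z)) ^ (K - 1)
              * (marcumQ N (Real.sqrt (μ ^ 2 / (1 - μ ^ 2) * r)) (Real.sqrt z)
                  - marcumQ (N - 1) (Real.sqrt (μ ^ 2 / (1 - μ ^ 2) * r)) (Real.sqrt z))
          else 0)) := by
  have := isProbabilityMeasure_gammaMeasure (a := N) (r := 1 / 2) (by positivity) (by positivity)
  have := Fin.pos_iff_nonempty.mp hK
  have hratio : 0 ≤ μ ^ 2 / (1 - μ ^ 2) := div_nonneg (sq_nonneg μ) (by nlinarith [hμ.1, hμ.2])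
  have hlam := (ae_gammaMeasure_pos N (1 / 2)).mono fun r hr => mul_nonneg hratio hr.le
  simp only [stmt6_general hN (measurable_const_mul _) hlam hκ, Fintype.card_fin, mul_assoc,
    half_mul_integral_gammaMeasure_natCast_half (N := N) (by lia)]
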